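/- Let G be a nonempty graph. Then the following statements are equivalent: (1) G' is the disjoint union of complete bipartite graphs; (2) there is an ultrametric space (X,d) such that G is isomorphic to a proximinal graph for (X,d). -/

import Mathlib

open Set

/-- A semimetric on a set `X`: a symmetric, nonnegative distance function
vanishing exactly on the diagonal. -/
structure IsSemimetric {X : Type*} (d : X → X → ℝ) : Prop where
  nonneg : ∀ x y, 0 ≤ d x y
  symm : ∀ x y, d x y = d y x
  eq_zero_iff : ∀ x y, d x y = 0 ↔ x = y

/-- A metric: a semimetric satisfying the triangle inequality. -/
def IsMetric {X : Type*} (d : X → X → ℝ) : Prop :=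
  IsSemimetric d ∧ ∀ x y z, d x y ≤ d x z + d z y

/-- An ultrametric: a semimetric satisfying the strong triangle inequality
(which implies the triangle inequality). -/
def IsUltrametric {X : Type*} (d : X → X → ℝ) : Prop :=
  IsSemimetric d ∧ ∀ x y z, d x y ≤ max (d x z) (d z y)

/-- `dist(A,B) = inf {d a b : a ∈ A, b ∈ B}`. -/
noncomputable def SetDist {X : Type*} (d : X → X → ℝ) (A B : Set X) : ℝ :=
  sInf (Set.image2 d A B)

/-- `A` is proximinal in `(X,d)`: every point of `X` has a best approximation in `A`. -/
def Proximinal {X : Type*} (d : X → X → ℝ) (A : Set X) : Prop :=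
  ∀ x : X, ∃ a ∈ A, d x a = sInf ((d x) '' A)

/-- `G` is the proximinal graph `G_{X,d}(A,B)`: a bipartite graph with (nonempty,
disjoint, proximinal) parts `A` and `B`, whose vertex set is `A ∪ B` (all other
points of the ambient type are isolated and are not vertices of the graph), and in
which `a ∈ A` and `b ∈ B` are adjacent iff `d a b = dist(A,B)`. -/
structure ProximinalFor {X : Type*} (d : X → X → ℝ) (G : SimpleGraph X) (A B : Set X) : Prop where
  nonemptyA : A.Nonempty
  nonemptyB : B.Nonempty
  disj : Disjoint A B
  proxA : Proximinal d A
  proxB : Proximinal d B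
  edges_between : ∀ u v, G.Adj u v → (u ∈ A ∧ v ∈ B) ∨ (u ∈ B ∧ v ∈ A)
  adj_iff : ∀ a ∈ A, ∀ b ∈ B, (G.Adj a b ↔ d a b = SetDist d A B)

/-- `G` is a farthest graph for `(X,d)` with parts `A`, `B`: `a ∈ A` and `b ∈ B`
are adjacent iff `d a b = sup {d x y : x ∈ A, y ∈ B}`, i.e. iff `d a b` is an upper
bound of all the cross distances. -/
structure FarthestFor {X : Type*} (d : X → X → ℝ) (G : SimpleGraph X) (A B : Set X) : Prop where
  nonemptyA : A.Nonempty
  nonemptyB : B.Nonempty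
  disj : Disjoint A B
  edges_between : ∀ u v, G.Adj u v → (u ∈ A ∧ v ∈ B) ∨ (u ∈ B ∧ v ∈ A)
  adj_iff : ∀ a ∈ A, ∀ b ∈ B, (G.Adj a b ↔ ∀ x ∈ A, ∀ y ∈ B, d x y ≤ d a b)

universe u

/-- `G'` (vertex set `G.support`, edge set `E(G)`) is a disjoint union of complete
bipartite graphs. -/
def SupportIsDisjointUnionOfCompleteBipartite {V : Type u} (G : SimpleGraph V) : Prop :=
  ∃ (ι : Type u) (C D : ι → Set V),
    (∀ i, (C i).Nonempty) ∧ (∀ i, (D i).Nonempty) ∧ (∀ i, Disjoint (C i) (D i)) ∧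
    (Pairwise fun i j => Disjoint (C i ∪ D i) (C j ∪ D j)) ∧
    (⋃ i, C i ∪ D i) = G.support ∧
    (∀ u v, G.Adj u v ↔ ∃ i, (u ∈ C i ∧ v ∈ D i) ∨ (u ∈ D i ∧ v ∈ C i))

/-!
Call a graph a cluster graph if adjacency is an equivalence relation `r` restricted to distinct
vertices. A disjoint union of complete bipartite graphs, with isolated vertices added, consists of
the edges of a cluster graph that run between two disjoint sets `A` and `B`. In an ultrametric space
the closed balls of radius `dist(A, B)` partition the points, and `a ∈ A`, `b ∈ B` lie in a common
ball exactly when `d a b = dist(A, B)`. Conversely, giving distinct points distance `1` or `2`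
according to whether or not `r` relates them is an ultrametric realising any such graph that has an
edge.
-/

section ClusterGraph

variable {V W : Type*}

/-- The cluster graph of an equivalence relation: the disjoint union of the complete graphs on its
classes. -/
def clusterGraph (r : Setoid V) : SimpleGraph V where
  Adj u v := u ≠ v ∧ r u v
  symm := ⟨fun _ _ h => ⟨h.1.symm, r.symm' h.2⟩⟩
  loopless := ⟨fun _ h => h.1 rfl⟩

lemma clusterGraph_between_adj {r : Setoid V} {A B : Set V} (hAB : Disjoint A B) {u v : V} :
    ((clusterGraph r).between A B).Adj u v ↔ r u v ∧ (u ∈ A ∧ v ∈ B ∨ u ∈ B ∧ v ∈ A) := by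
  have ne_of_cross : u ∈ A ∧ v ∈ B ∨ u ∈ B ∧ v ∈ A → u ≠ v := by
    rintro (⟨hu, hv⟩ | ⟨hu, hv⟩)
    · exact hAB.ne_of_mem hu hv
    · exact hAB.symm.ne_of_mem hu hv
  rw [SimpleGraph.between_adj]
  exact ⟨fun h => ⟨h.1.2, h.2⟩, fun h => ⟨⟨ne_of_cross h.2, h.1⟩, h.2⟩⟩

lemma exists_rel_of_edgeSet_clusterGraph_between_nonempty {r : Setoid V} {A B : Set V}
    (h : ((clusterGraph r).between A B).edgeSet.Nonempty) : ∃ a ∈ A, ∃ b ∈ B, r a b := by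
  obtain ⟨⟨u, v⟩, ⟨-, huv⟩, ⟨hu, hv⟩ | ⟨hu, hv⟩⟩ := h
  · exact ⟨u, hu, v, hv, huv⟩
  · exact ⟨v, hv, u, hu, r.symm' huv⟩

lemma comap_clusterGraph (r : Setoid W) (f : V ↪ W) :
    (clusterGraph r).comap f = clusterGraph (r.comap f) := by
  ext u v
  exact and_congr_left' f.injective.ne_iff

lemma comap_between (G : SimpleGraph W) (A B : Set W) (f : V → W) :
    (G.between A B).comap f = (G.comap f).between (f ⁻¹' A) (f ⁻¹' B) :=
  rfl

end ClusterGraph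

section DisjointUnion

variable {V W : Type*}

lemma iUnion_union_eq_support {ι : Sort*} {G : SimpleGraph V} {C D : ι → Set V}
    (hC : ∀ i, (C i).Nonempty) (hD : ∀ i, (D i).Nonempty)
    (hG : ∀ u v, G.Adj u v ↔ ∃ i, (u ∈ C i ∧ v ∈ D i) ∨ (u ∈ D i ∧ v ∈ C i)) :
    ⋃ i, C i ∪ D i = G.support := by
  ext u
  simp only [mem_iUnion, mem_union, SimpleGraph.mem_support, hG]
  constructor
  · rintro ⟨i, hu | hu⟩
    · exact (hD i).imp fun v hv => ⟨i, .inl ⟨hu, hv⟩⟩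
    · exact (hC i).imp fun v hv => ⟨i, .inr ⟨hu, hv⟩⟩
  · rintro ⟨v, i, hi⟩
    exact ⟨i, hi.imp And.left And.left⟩

lemma setOf_mem_eq_singleton {α ι : Type*} {E : ι → Set α}
    (hE : Pairwise fun i j => Disjoint (E i) (E j)) {x : α} {i : ι} (hx : x ∈ E i) :
    {j | x ∈ E j} = {i} := by
  ext j
  exact ⟨fun hj => hE.eq (not_disjoint_iff.2 ⟨x, hj, hx⟩), fun hj => hj ▸ hx⟩

theorem supportIsDisjointUnionOfCompleteBipartite_clusterGraph_between (r : Setoid V) {A B : Set V}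
    (hAB : Disjoint A B) :
    SupportIsDisjointUnionOfCompleteBipartite ((clusterGraph r).between A B) := by
  let ι := {c : Set V // c ∈ r.classes ∧ (c ∩ A).Nonempty ∧ (c ∩ B).Nonempty}
  have hC (c : ι) : (c.1 ∩ A).Nonempty := c.2.2.1
  have hD (c : ι) : (c.1 ∩ B).Nonempty := c.2.2.2
  have classes_disjoint : Pairwise fun c c' : ι => Disjoint c.1 c'.1 := fun c c' hne =>
    r.isPartition_classes.pairwiseDisjoint c.2.1 c'.2.1 (Subtype.coe_injective.ne hne)
  have hadj (u v : V) : ((clusterGraph r).between A B).Adj u v ↔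
      ∃ c : ι, (u ∈ c.1 ∩ A ∧ v ∈ c.1 ∩ B) ∨ (u ∈ c.1 ∩ B ∧ v ∈ c.1 ∩ A) := by
    rw [clusterGraph_between_adj hAB, r.rel_iff_exists_classes]
    constructor
    · rintro ⟨⟨c, hc, huc, hvc⟩, ⟨hu, hv⟩ | ⟨hu, hv⟩⟩
      · exact ⟨⟨c, hc, ⟨u, huc, hu⟩, ⟨v, hvc, hv⟩⟩, .inl ⟨⟨huc, hu⟩, ⟨hvc, hv⟩⟩⟩
      · exact ⟨⟨c, hc, ⟨v, hvc, hv⟩, ⟨u, huc, hu⟩⟩, .inr ⟨⟨huc, hu⟩, ⟨hvc, hv⟩⟩⟩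
    · rintro ⟨c, ⟨hu, hv⟩ | ⟨hu, hv⟩⟩
      · exact ⟨⟨c.1, c.2.1, hu.1, hv.1⟩, .inl ⟨hu.2, hv.2⟩⟩
      · exact ⟨⟨c.1, c.2.1, hu.1, hv.1⟩, .inr ⟨hu.2, hv.2⟩⟩
  refine ⟨ι, fun c => c.1 ∩ A, fun c => c.1 ∩ B, hC, hD, fun c => ?_, fun c c' hne => ?_,
    iUnion_union_eq_support hC hD hadj, hadj⟩
  · exact hAB.mono inter_subset_right inter_subset_right
  · exact (classes_disjoint hne).mono (union_subset inter_subset_left inter_subset_left)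
      (union_subset inter_subset_left inter_subset_left)

theorem SupportIsDisjointUnionOfCompleteBipartite.exists_eq_clusterGraph_between_compl
    {G : SimpleGraph V} (hG : SupportIsDisjointUnionOfCompleteBipartite G) :
    ∃ (r : Setoid V) (A : Set V), G = (clusterGraph r).between A Aᶜ := by
  obtain ⟨ι, C, D, -, -, hCD, hdisj, -, hadj⟩ := hG
  have notMem_C {i : ι} {v : V} (hv : v ∈ D i) : v ∉ ⋃ j, C j := by
    rw [mem_iUnion]
    rintro ⟨j, hj⟩
    obtain rfl : j = i := hdisj.eq (not_disjoint_iff.2 ⟨v, .inl hj, .inr hv⟩)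
    exact disjoint_left.1 (hCD j) hj hv
  -- Points outside every block form one further class, harmless because it misses `⋃ i, C i`.
  let r : Setoid V := Setoid.ker fun v => {i | v ∈ C i ∪ D i}
  have rel_of_mem {i : ι} {u v : V} (hu : u ∈ C i ∪ D i) (hv : v ∈ C i ∪ D i) : r u v :=
    (setOf_mem_eq_singleton hdisj hu).trans (setOf_mem_eq_singleton hdisj hv).symm
  have mem_D_of_rel {i : ι} {u v : V} (huv : r u v) (hu : u ∈ C i) (hv : v ∉ ⋃ j, C j) :
      v ∈ D i := by
    have hv' : v ∈ C i ∪ D i := (Set.ext_iff.1 huv i).1 (.inl hu)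
    exact hv'.resolve_left fun h => hv (mem_iUnion_of_mem i h)
  refine ⟨r, ⋃ i, C i, ?_⟩
  ext u v
  rw [hadj, clusterGraph_between_adj disjoint_compl_right]
  constructor
  · rintro ⟨i, ⟨hu, hv⟩ | ⟨hu, hv⟩⟩
    · exact ⟨rel_of_mem (.inl hu) (.inr hv), .inl ⟨mem_iUnion_of_mem i hu, notMem_C hv⟩⟩
    · exact ⟨rel_of_mem (.inr hu) (.inl hv), .inr ⟨notMem_C hu, mem_iUnion_of_mem i hv⟩⟩
  · rintro ⟨huv, ⟨hu, hv⟩ | ⟨hu, hv⟩⟩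
    · obtain ⟨i, hi⟩ := mem_iUnion.1 hu
      exact ⟨i, .inl ⟨hi, mem_D_of_rel huv hi hv⟩⟩
    · obtain ⟨i, hi⟩ := mem_iUnion.1 hv
      exact ⟨i, .inr ⟨mem_D_of_rel (r.symm' huv) hi hu, hi⟩⟩

theorem SupportIsDisjointUnionOfCompleteBipartite.of_embedding {G : SimpleGraph V}
    {H : SimpleGraph W} (hH : SupportIsDisjointUnionOfCompleteBipartite H) (f : G ↪g H) :
    SupportIsDisjointUnionOfCompleteBipartite G := by
  obtain ⟨r, A, rfl⟩ := hH.exists_eq_clusterGraph_between_compl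
  have hG : G = (clusterGraph (r.comap f)).between (f ⁻¹' A) (f ⁻¹' A)ᶜ := by
    calc
      G = ((clusterGraph r).between A Aᶜ).comap f := f.comap_eq.symm
      _ = ((clusterGraph r).comap f).between (f ⁻¹' A) (f ⁻¹' A)ᶜ := comap_between _ A Aᶜ f
      _ = (clusterGraph (r.comap f)).between (f ⁻¹' A) (f ⁻¹' A)ᶜ :=
        congrArg _ (comap_clusterGraph r f.toEmbedding)
  rw [hG]
  exact supportIsDisjointUnionOfCompleteBipartite_clusterGraph_between _ disjoint_compl_right

end DisjointUnion

section ProximinalGraph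

variable {X : Type*} {d : X → X → ℝ} {A B : Set X}

lemma IsSemimetric.setDist_nonneg (hd : IsSemimetric d) (A B : Set X) : 0 ≤ SetDist d A B :=
  Real.sInf_nonneg (forall_mem_image2.2 fun a _ b _ => hd.nonneg a b)

lemma IsSemimetric.setDist_le (hd : IsSemimetric d) {a b : X} (ha : a ∈ A) (hb : b ∈ B) :
    SetDist d A B ≤ d a b :=
  csInf_le ⟨0, forall_mem_image2.2 fun a _ b _ => hd.nonneg a b⟩ (mem_image2_of_mem ha hb)

/-- The partition of an ultrametric space into closed balls of radius `t`, as an equivalence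
relation. -/
def IsUltrametric.closedBallSetoid (hd : IsUltrametric d) {t : ℝ} (ht : 0 ≤ t) : Setoid X where
  r x y := d x y ≤ t
  iseqv :=
    { refl := fun x => ((hd.1.eq_zero_iff x x).2 rfl).trans_le ht
      symm := fun {x y} hxy => (hd.1.symm y x).trans_le hxy
      trans := fun {x y z} hxy hyz => (hd.2 x z y).trans (max_le hxy hyz) }

lemma ProximinalFor.adj_iff_le {H : SimpleGraph X} (hH : ProximinalFor d H A B)
    (hd : IsSemimetric d) {a b : X} (ha : a ∈ A) (hb : b ∈ B) :
    H.Adj a b ↔ d a b ≤ SetDist d A B :=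
  (hH.adj_iff a ha b hb).trans (hd.setDist_le ha hb).ge_iff_eq'.symm

theorem ProximinalFor.eq_clusterGraph_between {H : SimpleGraph X} (hH : ProximinalFor d H A B)
    (hd : IsUltrametric d) :
    H = (clusterGraph (hd.closedBallSetoid (hd.1.setDist_nonneg A B))).between A B := by
  set r := hd.closedBallSetoid (hd.1.setDist_nonneg A B)
  have adj_iff_rel {a b : X} (ha : a ∈ A) (hb : b ∈ B) : H.Adj a b ↔ r a b :=
    hH.adj_iff_le hd.1 ha hb
  have adj_iff_rel_of_cross {u v : X} (huv : u ∈ A ∧ v ∈ B ∨ u ∈ B ∧ v ∈ A) :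
      H.Adj u v ↔ r u v := by
    rcases huv with ⟨hu, hv⟩ | ⟨hu, hv⟩
    · exact adj_iff_rel hu hv
    · rw [H.adj_comm, r.comm', adj_iff_rel hv hu]
  ext u v
  rw [clusterGraph_between_adj hH.disj]
  exact ⟨fun h => ⟨(adj_iff_rel_of_cross (hH.edges_between u v h)).1 h, hH.edges_between u v h⟩,
    fun h => (adj_iff_rel_of_cross h.2).2 h.1⟩

theorem ProximinalFor.supportIsDisjointUnionOfCompleteBipartite {H : SimpleGraph X}
    (hH : ProximinalFor d H A B) (hd : IsUltrametric d) :
    SupportIsDisjointUnionOfCompleteBipartite H := by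
  rw [hH.eq_clusterGraph_between hd]
  exact supportIsDisjointUnionOfCompleteBipartite_clusterGraph_between _ hH.disj

lemma proximinal_of_finite_range (hd : ∀ x, (range (d x)).Finite) (hA : A.Nonempty) :
    Proximinal d A := fun x =>
  (hA.image (d x)).csInf_mem ((hd x).subset (image_subset_range _ _))

end ProximinalGraph

section SetoidDist

variable {X : Type*} {r : Setoid X} {x y : X} {A B : Set X}

open Classical in
/-- The distance attached to an equivalence relation: distinct points are at distance `1` within a
class and at distance `2` across classes. -/
noncomputable def setoidDist (r : Setoid X) (x y : X) : ℝ :=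
  if x = y then 0 else if r x y then 1 else 2

lemma setoidDist_self (r : Setoid X) (x : X) : setoidDist r x x = 0 :=
  if_pos rfl

lemma setoidDist_mem (r : Setoid X) (x y : X) : setoidDist r x y ∈ ({0, 1, 2} : Set ℝ) := by
  unfold setoidDist
  split_ifs <;> simp

lemma setoidDist_le_two (r : Setoid X) (x y : X) : setoidDist r x y ≤ 2 := by
  rcases setoidDist_mem r x y with h | h | h <;> rw [h] <;> norm_num

lemma one_le_setoidDist (hxy : x ≠ y) : 1 ≤ setoidDist r x y := by
  rw [setoidDist, if_neg hxy]
  split_ifs <;> norm_num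

lemma setoidDist_eq_one_iff (hxy : x ≠ y) : setoidDist r x y = 1 ↔ r x y := by
  simp [setoidDist, hxy]

lemma setoidDist_eq_two (hxy : ¬ r x y) : setoidDist r x y = 2 := by
  have hne : x ≠ y := fun h => hxy (h ▸ r.refl' x)
  simp [setoidDist, hne, hxy]

open Classical in
lemma setoidDist_comm (r : Setoid X) (x y : X) : setoidDist r x y = setoidDist r y x :=
  if_congr eq_comm rfl (if_congr r.comm' rfl rfl)

lemma setoidDist_le_max (r : Setoid X) (x y z : X) :
    setoidDist r x y ≤ max (setoidDist r x z) (setoidDist r z y) := by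
  rcases eq_or_ne x z with rfl | hxz
  · exact le_max_right _ _
  rcases eq_or_ne x y with rfl | hxy
  · rw [setoidDist_self]
    exact le_max_of_le_left (zero_le_one.trans (one_le_setoidDist hxz))
  by_cases rel_xz : r x z
  · by_cases rel_zy : r z y
    · rw [(setoidDist_eq_one_iff hxy).2 (r.trans' rel_xz rel_zy)]
      exact le_max_of_le_left (one_le_setoidDist hxz)
    · exact le_max_of_le_right ((setoidDist_le_two r x y).trans_eq (setoidDist_eq_two rel_zy).symm)
  · exact le_max_of_le_left ((setoidDist_le_two r x y).trans_eq (setoidDist_eq_two rel_xz).symm)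

theorem isUltrametric_setoidDist (r : Setoid X) : IsUltrametric (setoidDist r) := by
  refine ⟨⟨fun x y => ?_, setoidDist_comm r, fun x y => ⟨fun h => ?_, ?_⟩⟩, setoidDist_le_max r⟩
  · rcases setoidDist_mem r x y with h | h | h <;> rw [h] <;> norm_num
  · by_contra hxy
    linarith [one_le_setoidDist (r := r) hxy]
  · rintro rfl
    exact setoidDist_self r x

lemma proximinal_setoidDist (r : Setoid X) (hA : A.Nonempty) : Proximinal (setoidDist r) A :=
  proximinal_of_finite_range
    (fun x => (toFinite {0, 1, 2}).subset (range_subset_iff.2 (setoidDist_mem r x))) hA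

lemma setDist_setoidDist_eq_one (hAB : Disjoint A B) (h : ∃ a ∈ A, ∃ b ∈ B, r a b) :
    SetDist (setoidDist r) A B = 1 := by
  obtain ⟨a, ha, b, hb, hab⟩ := h
  have one_attained := (setoidDist_eq_one_iff (hAB.ne_of_mem ha hb)).2 hab
  exact IsLeast.csInf_eq ⟨⟨a, ha, b, hb, one_attained⟩,
    forall_mem_image2.2 fun _ hx _ hy => one_le_setoidDist (hAB.ne_of_mem hx hy)⟩

theorem proximinalFor_setoidDist (hAB : Disjoint A B) (h : ∃ a ∈ A, ∃ b ∈ B, r a b) :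
    ProximinalFor (setoidDist r) ((clusterGraph r).between A B) A B := by
  obtain ⟨a, ha, b, hb, -⟩ := id h
  refine ⟨⟨a, ha⟩, ⟨b, hb⟩, hAB, proximinal_setoidDist r ⟨a, ha⟩, proximinal_setoidDist r ⟨b, hb⟩,
    fun u v huv => huv.2, fun x hx y hy => ?_⟩
  rw [clusterGraph_between_adj hAB, setDist_setoidDist_eq_one hAB h,
    setoidDist_eq_one_iff (hAB.ne_of_mem hx hy)]
  exact and_iff_left (.inl ⟨hx, hy⟩)

end SetoidDist

/-- Corollary 2.13: a nonempty graph `G` satisfies: `G'` is the disjoint union of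
complete bipartite graphs iff there is an ultrametric space `(X,d)` such that `G`
is isomorphic to a proximinal graph for `(X,d)`. -/
theorem stmt11 {V : Type u} (G : SimpleGraph V) (hne : G.edgeSet.Nonempty) :
    SupportIsDisjointUnionOfCompleteBipartite G ↔
      ∃ (X : Type u) (d : X → X → ℝ) (H : SimpleGraph X) (A B : Set X),
        IsUltrametric d ∧ ProximinalFor d H A B ∧ A ∪ B = Set.univ ∧
        Nonempty (G ≃g H) := by
  constructor
  · intro hG
    obtain ⟨r, A, rfl⟩ := hG.exists_eq_clusterGraph_between_compl
    have hr := exists_rel_of_edgeSet_clusterGraph_between_nonempty hne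
    exact ⟨V, setoidDist r, _, A, Aᶜ, isUltrametric_setoidDist r,
      proximinalFor_setoidDist disjoint_compl_right hr, union_compl_self A, ⟨.refl⟩⟩
  · rintro ⟨X, d, H, A, B, hd, hH, -, ⟨e⟩⟩
    exact (hH.supportIsDisjointUnionOfCompleteBipartite hd).of_embedding e.toEmbedding
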